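/- arXiv:1308.1579 — 2 statements merged into one kernel-verified Lean document; each statement's English description precedes it below -/
import Mathlib

section
/- Let k be a positive integer and let 0 < N₁ < N₂ < ⋯ < N_k be positive real numbers. Then there exist real numbers θ₁, θ₂, …, θ_{2k} such that the (2k)×(2k) real matrix whose rows are, for i = 1, …, k, the row (sin(N_i θ₁), …, sin(N_i θ_{2k})) followed by the row (cos(N_i θ₁), …, cos(N_i θ_{2k})), has nonzero determinant (equivalently, is invertible). -/
/-!
The `2k` functions `t ↦ sin (Nᵢ t)`, `t ↦ cos (Nᵢ t)` are linearly independent over `ℝ`: by Euler's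
formula a real linear relation between them is a complex linear relation between the characters
`t ↦ exp (± Nᵢ t * I)` of `ℝ`, which are pairwise distinct because the frequencies `± Nᵢ` are, so
Dedekind's theorem on the independence of characters applies (`linearIndependent_sin_cos`).

Linearly independent functions `f₁, …, fₙ` admit sample points with nonsingular evaluation matrix
(`exists_det_eval_ne_zero`): no nonzero functional vanishes on all the evaluation vectors
`(f₁ t, …, fₙ t)`, so these span the whole space and a basis can be chosen among them.
-/

/-- The vectors `(f i t)ᵢ` span `ι → ℝ`, as a functional vanishing on all of them would be a linear
relation between the `f i`; the points are those of a basis extracted from this spanning set. -/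
theorem exists_det_eval_ne_zero {ι α : Type*} [Fintype ι] [DecidableEq ι] (f : ι → α → ℝ)
    (hf : LinearIndependent ℝ f) :
    ∃ θ : ι → α, (Matrix.of (fun i j => f i (θ j))).det ≠ 0 := by
  set v : α → ι → ℝ := fun t i => f i t with hv
  have hspan : Submodule.span ℝ (Set.range v) = ⊤ := by
    by_contra hne
    obtain ⟨φ, hφ, hle⟩ := Submodule.exists_le_ker_of_lt_top _ (lt_top_iff_ne_top.mpr hne)
    apply hφ
    have hrel : ∑ i, φ (Pi.single i 1) • f i = 0 := by
      funext t
      have h1 : φ (v t) = 0 := hle (Submodule.subset_span ⟨t, rfl⟩)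
      rw [LinearMap.pi_apply_eq_sum_univ φ (v t)] at h1
      simp only [Finset.sum_apply, Pi.smul_apply, smul_eq_mul, Pi.zero_apply]
      rw [← h1]
      refine Finset.sum_congr rfl fun i _ => ?_
      rw [smul_eq_mul, mul_comm]
      congr 2
      funext j
      simp [Pi.single_apply, eq_comm]
    have hz := Fintype.linearIndependent_iff.mp hf _ hrel
    refine LinearMap.pi_ext' fun i => LinearMap.ext_ring ?_
    simpa using hz i
  obtain ⟨b, hb, hbspan, hbli⟩ := exists_linearIndependent ℝ (Set.range v)
  have htop : ⊤ ≤ Submodule.span ℝ (Set.range ((↑) : b → ι → ℝ)) := by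
    rw [Subtype.range_coe, hbspan, hspan]
  let e := (Pi.basisFun ℝ ι).indexEquiv (Module.Basis.mk hbli htop)
  choose θ hθ using fun j : ι => hb (e j).2
  refine ⟨θ, ?_⟩
  rw [← isUnit_iff_ne_zero, ← Matrix.isUnit_iff_isUnit_det,
    ← Matrix.linearIndependent_cols_iff_isUnit]
  have hcol : (Matrix.of (fun i j => f i (θ j))).col = (fun x : b => (x : ι → ℝ)) ∘ e := by
    funext j
    exact hθ j
  rw [hcol]
  exact hbli.comp e e.injective

/-- The character `t ↦ exp (m t I)` of the additive group `ℝ`, with frequency `m`. -/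
noncomputable def expChar (m : ℝ) : Multiplicative ℝ →* ℂ where
  toFun t := Complex.exp (m * (t.toAdd : ℝ) * Complex.I)
  map_one' := by simp
  map_mul' s t := by
    rw [← Complex.exp_add]
    congr 1
    push_cast [toAdd_mul]
    ring

theorem expChar_injective : Function.Injective expChar := by
  intro m n h
  have hderiv : ∀ a : ℝ, HasDerivAt (fun t : ℝ => Complex.exp (a * t * Complex.I))
      (a * Complex.I) 0 := by
    intro a
    have h1 : HasDerivAt (fun t : ℝ => (a : ℂ) * t * Complex.I) (a * 1 * Complex.I) 0 :=
      ((Complex.ofRealCLM.hasDerivAt (x := (0 : ℝ))).const_mul (a : ℂ)).mul_const _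
    simpa using h1.cexp
  have hfun : (fun t : ℝ => Complex.exp (m * t * Complex.I)) =
      fun t : ℝ => Complex.exp (n * t * Complex.I) := by
    funext t
    exact DFunLike.congr_fun h (Multiplicative.ofAdd t)
  have := (hderiv m).unique (hfun ▸ hderiv n)
  exact_mod_cast mul_right_cancel₀ Complex.I_ne_zero this

theorem linearIndependent_sin_cos {k : ℕ} (N : Fin k → ℝ) (hpos : ∀ i, 0 < N i)
    (hinj : Function.Injective N) :
    LinearIndependent ℝ (fun (p : Fin k × Fin 2) (t : ℝ) =>
      if p.2 = 0 then Real.sin (N p.1 * t) else Real.cos (N p.1 * t)) := by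
  let m : Fin k × Fin 2 → ℝ := fun p => if p.2 = 0 then N p.1 else -N p.1
  have hm : Function.Injective m := by
    rintro ⟨i, a⟩ ⟨j, b⟩ h
    have hi := hpos i
    have hj := hpos j
    fin_cases a <;> fin_cases b <;> simp [m] at h ⊢
    · exact hinj h
    · linarith
    · linarith
    · exact hinj h
  have hchar := (linearIndependent_monoidHom (Multiplicative ℝ) ℂ).comp (fun p => expChar (m p))
    (expChar_injective.comp hm)
  rw [Fintype.linearIndependent_iff] at hchar ⊢
  intro g hg
  -- `a sin x + b cos x = (b - a I) / 2 * exp (x I) + (b + a I) / 2 * exp (-x I)`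
  have hz := hchar (fun p => if p.2 = 0 then ((g (p.1, 1) : ℂ) - g (p.1, 0) * Complex.I) / 2
    else ((g (p.1, 1) : ℂ) + g (p.1, 0) * Complex.I) / 2) (by
      funext t
      have ht := congrArg (fun x : ℝ => (x : ℂ)) (congrFun hg t.toAdd)
      simp only [Fintype.sum_prod_type, Fin.sum_univ_two, Finset.sum_apply,
        Pi.smul_apply, smul_eq_mul, Pi.zero_apply, Complex.ofReal_sum, Complex.ofReal_add,
        Complex.ofReal_mul, Complex.ofReal_zero, if_true, one_ne_zero, if_false,
        Complex.ofReal_sin, Complex.ofReal_cos] at ht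
      simp only [Fintype.sum_prod_type, Fin.sum_univ_two, Finset.sum_apply,
        Pi.smul_apply, smul_eq_mul, Pi.zero_apply, Function.comp_apply, if_true, one_ne_zero,
        if_false, m, expChar, MonoidHom.coe_mk, OneHom.coe_mk]
      rw [← ht]
      refine Finset.sum_congr rfl fun i _ => ?_
      push_cast
      rw [Complex.sin, Complex.cos]
      ring_nf)
  rintro ⟨i, a⟩
  have h0 := hz (i, 0)
  have h1 := hz (i, 1)
  simp only [if_true, one_ne_zero, if_false] at h0 h1
  have r0 := congrArg Complex.re h0
  have i0 := congrArg Complex.im h0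
  simp at r0 i0
  fin_cases a
  · simpa using i0
  · simpa using r0

/-- **Lemma 4.3.** Given `0 < N₁ < ⋯ < N_k`, there exist angles `θ₁, …, θ_{2k}` such
that the `(2k) × (2k)` matrix whose rows are alternately `(sin (Nᵢ θⱼ))ⱼ` and
`(cos (Nᵢ θⱼ))ⱼ` for `i = 1, …, k` is invertible (its determinant is nonzero). -/
theorem stmt2 (k : ℕ) (hk : 0 < k) (N : Fin k → ℝ)
    (hpos : ∀ i, 0 < N i) (hmono : StrictMono N) :
    ∃ θ : Fin (2 * k) → ℝ,
      (Matrix.of (fun i j : Fin (2 * k) =>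
        if (i : ℕ) % 2 = 0 then
          Real.sin (N ⟨(i : ℕ) / 2, by omega⟩ * θ j)
        else
          Real.cos (N ⟨(i : ℕ) / 2, by omega⟩ * θ j))).det ≠ 0 := by
  let e : Fin k × Fin 2 ≃ Fin (2 * k) := finProdFinEquiv.trans (finCongr (mul_comm k 2))
  refine exists_det_eval_ne_zero (fun (i : Fin (2 * k)) (t : ℝ) =>
    if (i : ℕ) % 2 = 0 then Real.sin (N ⟨(i : ℕ) / 2, by omega⟩ * t)
    else Real.cos (N ⟨(i : ℕ) / 2, by omega⟩ * t)) ?_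
  rw [← linearIndependent_equiv e]
  convert linearIndependent_sin_cos N hpos hmono.injective using 1
  funext p t
  obtain ⟨i, a⟩ := p
  have he : ((e (i, a) : Fin (2 * k)) : ℕ) = a + 2 * i := rfl
  have hdiv : (⟨((e (i, a) : Fin (2 * k)) : ℕ) / 2, by omega⟩ : Fin k) = i := by
    ext
    simp only [he]
    omega
  have hmod : ((e (i, a) : Fin (2 * k)) : ℕ) % 2 = 0 ↔ a = 0 := by
    rw [he, Fin.ext_iff, Fin.val_zero]
    omega
  simp only [Function.comp_apply, hdiv, hmod]
end

section
/- Let δ > 0, C > 0, and let f : ℝ² → ℝ be a measurable function with |f(η)| ≤ C(1 + |η|)^{−2−δ} for all η ∈ ℝ². Then the logarithmic potential w(y) = −(1/(2π)) ∫_{ℝ²} log|y − η| f(η) dη is differentiable on ℝ² and its gradient satisfies |∇w(y)| ≤ C′ (1 + |y|)^{−1} for all y ∈ ℝ², where C′ depends only on C and δ. -/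
/-!
Write `u = y - η`. Replacing `log ‖u + h‖` by its first-order expansion at `u` leaves a remainder
`R(u, h)` satisfying two estimates: with `X = ‖h‖ (1 / ‖u‖ + 1 / ‖u + h‖)`, a second-order one,
`|R| ≤ X ^ 2 / 2`, and a first-order one, `|R| ≤ 2 X`. Interpolating gives `|R| ≤ 2 X ^ (3 / 2)`
(`log_norm_remainder_le`). The exponent `3 / 2` is above `1`, so the remainder is `o(‖h‖)`, and below
the dimension `2`, so `‖u‖ ^ (-3 / 2)` is locally integrable and its integral against `|f|` is bounded
uniformly in `y` (`kernel_integral_le`). Hence the potential is differentiable, and its derivative is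
obtained by differentiating under the integral sign (`hasFDerivAt_log_potential`).

For the decay, it suffices to bound `(1 + ‖y‖) ∫ ‖y - η‖⁻¹ |f η| dη`. The pointwise inequality
`one_add_norm_mul_kernel_le` dominates the integrand by functions of `η` alone and of `y - η` alone,
so by translation invariance the bound does not depend on `y`.
-/

open MeasureTheory

lemma rpow_three_halves_add_le {x y : ℝ} (hx : 0 ≤ x) (hy : 0 ≤ y) :
    (x + y) ^ (3 / 2 : ℝ) ≤ 2 * (x ^ (3 / 2 : ℝ) + y ^ (3 / 2 : ℝ)) := by
  have h := NNReal.rpow_add_le_mul_rpow_add_rpow ⟨x, hx⟩ ⟨y, hy⟩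
    (p := 3 / 2) (by norm_num)
  have h' : (x + y) ^ (3 / 2 : ℝ) ≤
      (2 : ℝ) ^ (3 / 2 - 1 : ℝ) * (x ^ (3 / 2 : ℝ) + y ^ (3 / 2 : ℝ)) := by
    exact_mod_cast h
  refine h'.trans (mul_le_mul_of_nonneg_right ?_ (by positivity))
  calc (2 : ℝ) ^ (3 / 2 - 1 : ℝ) ≤ 2 ^ (1 : ℝ) :=
        Real.rpow_le_rpow_of_exponent_le (by norm_num) (by norm_num)
    _ = 2 := by simp

/-- Interpolation between a quadratic and a linear bound. -/
lemma le_rpow_three_halves {R X : ℝ} (hX : 0 ≤ X) (h1 : R ≤ X ^ 2 / 2) (h2 : R ≤ 2 * X) :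
    R ≤ 2 * X ^ (3 / 2 : ℝ) := by
  rcases le_total X 1 with h | h
  · have : X ^ (2 : ℝ) ≤ X ^ (3 / 2 : ℝ) := 
      Real.rpow_le_rpow_of_exponent_ge' hX h (by norm_num) (by norm_num)
    rw [Real.rpow_two] at this
    nlinarith [sq_nonneg X]
  · have : X ^ (1 : ℝ) ≤ X ^ (3 / 2 : ℝ) := 
      Real.rpow_le_rpow_of_exponent_le h (by norm_num)
    rw [Real.rpow_one] at this
    linarith

/-- The remainder estimate in terms of `a = ‖u‖`, `b = ‖u + h‖`, `k = ‖h‖` and `p = ⟪u, h⟫`. -/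
lemma log_remainder_le {a b k p : ℝ} (ha : 0 < a) (hb : 0 < b) (hk : 0 ≤ k)
    (hab : |b - a| ≤ k) (hp : |p| ≤ a * k) (hb2 : b ^ 2 = a ^ 2 + 2 * p + k ^ 2) :
    |Real.log b - Real.log a - p / a ^ 2| ≤
      4 * k ^ (3 / 2 : ℝ) * (a ^ (-(3 / 2) : ℝ) + b ^ (-(3 / 2) : ℝ)) := by
  have hX : 0 ≤ k * (a⁻¹ + b⁻¹) := by positivity
  have hlog : Real.log b - Real.log a = Real.log (b / a) :=
    (Real.log_div hb.ne' ha.ne').symm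
  obtain ⟨hab1, hab2⟩ := abs_le.1 hab
  have hq : 0 < b / a := by positivity
  -- With `q = (b / a) ^ 2`, the remainder is `(log q - (q - 1)) / 2 + (k / a) ^ 2 / 2`, and
  -- `0 ≤ (q - 1) - log q ≤ (q - 1) ^ 2 / q = ((b - a) (1 / a + 1 / b)) ^ 2`; the two terms have
  -- opposite signs, so it is enough to bound each of them.
  have h1 : |Real.log b - Real.log a - p / a ^ 2| ≤ (k * (a⁻¹ + b⁻¹)) ^ 2 / 2 := by
    have e1 : Real.log ((b / a) ^ 2) = 2 * Real.log (b / a) := by simp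
    have u1 := Real.log_le_sub_one_of_pos (pow_pos hq 2)
    have u2 := Real.one_sub_inv_le_log_of_pos (pow_pos hq 2)
    rw [e1] at u1 u2
    have e2 : p / a ^ 2 = ((b / a) ^ 2 - 1 - (k / a) ^ 2) / 2 := by
      field_simp
      linarith
    have e3 : (b / a) ^ 2 - 1 - (1 - ((b / a) ^ 2)⁻¹) = (b - a) ^ 2 * (a⁻¹ + b⁻¹) ^ 2 := by
      field_simp
      ring
    have e4 : (b - a) ^ 2 ≤ k ^ 2 := sq_le_sq' hab1 hab2
    have e5 : (b - a) ^ 2 * (a⁻¹ + b⁻¹) ^ 2 ≤ k ^ 2 * (a⁻¹ + b⁻¹) ^ 2 := by gcongr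
    have e6 : (k / a) ^ 2 ≤ k ^ 2 * (a⁻¹ + b⁻¹) ^ 2 := by
      rw [div_eq_mul_inv, mul_pow]
      gcongr
      linarith [inv_pos.2 hb]
    rw [hlog, e2, abs_le, mul_pow]
    constructor <;> nlinarith [sq_nonneg (k / a)]
  have h2 : |Real.log b - Real.log a - p / a ^ 2| ≤ 2 * (k * (a⁻¹ + b⁻¹)) := by
    have u1 := Real.log_le_sub_one_of_pos hq
    have u2 := Real.one_sub_inv_le_log_of_pos hq
    have v1 : b / a - 1 ≤ k * a⁻¹ := by
      rw [div_sub_one ha.ne', div_eq_mul_inv]; gcongr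
    have v2 : -(k * b⁻¹) ≤ 1 - (b / a)⁻¹ := by
      rw [inv_div, one_sub_div hb.ne', div_eq_mul_inv, ← neg_mul]; gcongr
    have v3 : |p / a ^ 2| ≤ k * a⁻¹ := by
      rw [abs_div, abs_of_pos (pow_pos ha 2), div_le_iff₀ (pow_pos ha 2)]
      refine hp.trans (le_of_eq ?_)
      field_simp
    obtain ⟨v4, v5⟩ := abs_le.1 v3
    have := mul_nonneg hk (inv_pos.2 ha).le
    have := mul_nonneg hk (inv_pos.2 hb).le
    rw [hlog, abs_le]
    constructor <;> nlinarith
  refine (le_rpow_three_halves hX h1 h2).trans ?_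
  rw [Real.mul_rpow hk (by positivity), Real.rpow_neg ha.le, Real.rpow_neg hb.le,
    ← Real.inv_rpow ha.le, ← Real.inv_rpow hb.le]
  have := mul_le_mul_of_nonneg_left
    (rpow_three_halves_add_le (inv_pos.2 ha).le (inv_pos.2 hb).le)
    (Real.rpow_nonneg hk (3 / 2))
  linarith

lemma log_norm_remainder_le {E : Type*} [NormedAddCommGroup E] [InnerProductSpace ℝ E]
    {u h : E} (hu : u ≠ 0) (huh : u + h ≠ 0) :
    |Real.log ‖u + h‖ - Real.log ‖u‖ - inner ℝ u h / ‖u‖ ^ 2| ≤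
      4 * ‖h‖ ^ (3 / 2 : ℝ) * (‖u‖ ^ (-(3 / 2) : ℝ) + ‖u + h‖ ^ (-(3 / 2) : ℝ)) := by
  refine log_remainder_le (norm_pos_iff.2 hu) (norm_pos_iff.2 huh) (norm_nonneg h) ?_
    (abs_real_inner_le_norm u h) (norm_add_sq_real u h)
  simpa using abs_norm_sub_norm_le (u + h) u

/-- The singular part `‖u‖ ^ (-s)`, for `‖u‖ < 1`, of the Riesz kernel on the plane, extended by `0`
to `‖u‖ ≥ 1`. For `s ≠ 0` its value at the origin is `0`, the value of `0 ^ (-s)`. -/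
noncomputable def truncKernel (s : ℝ) : EuclideanSpace ℝ (Fin 2) → ℝ :=
  (Metric.ball 0 1).indicator fun u => ‖u‖ ^ (-s)

lemma truncKernel_nonneg (s : ℝ) (u : EuclideanSpace ℝ (Fin 2)) : 0 ≤ truncKernel s u :=
  Set.indicator_nonneg (fun _ _ => by positivity) u

lemma integrable_truncKernel {s : ℝ} (hs : s < 2) : Integrable (truncKernel s) := by
  refine (integrable_indicator_iff Metric.isOpen_ball.measurableSet).2 ?_
  refine integrableOn_ball_of_norm_le_rpow (C := 1) (α := s) (by simp) (by simpa using hs)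
    (Filter.Eventually.of_forall fun x => ?_)
    (Measurable.aestronglyMeasurable (by fun_prop))
  rw [one_mul, Real.norm_of_nonneg (by positivity)]

lemma rpow_neg_le_truncKernel_add_one {s : ℝ} (hs : 0 ≤ s) (u : EuclideanSpace ℝ (Fin 2)) :
    ‖u‖ ^ (-s) ≤ truncKernel s u + 1 := by
  by_cases h : u ∈ Metric.ball (0 : EuclideanSpace ℝ (Fin 2)) 1
  · simp [truncKernel, Set.indicator_of_mem h]
  · have h1 : 1 ≤ ‖u‖ := by simpa using h
    rw [truncKernel, Set.indicator_of_notMem h, zero_add]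
    exact Real.rpow_le_one_of_one_le_of_nonpos h1 (by linarith)

lemma integrable_weight {r : ℝ} (hr : 0 < r) :
    Integrable fun η : EuclideanSpace ℝ (Fin 2) => (1 + ‖η‖) ^ (-2 - r) := by
  have := integrable_one_add_norm (E := EuclideanSpace ℝ (Fin 2)) (μ := volume) (r := 2 + r)
    (by simpa using hr)
  refine this.congr (Filter.Eventually.of_forall fun x => ?_)
  simp only; congr 1; ring

/-- The weight `1 + ‖y‖`, with `y = u + η`, is absorbed into the kernel: outside the unit ball `‖u‖⁻¹`
is comparable to `(1 + ‖u‖)⁻¹`, and a product `A ^ (-1 - δ) * B⁻¹` with `A, B > 0` is at most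
`A ^ (-2 - δ) + B ^ (-2 - δ)`. -/
lemma one_add_norm_mul_kernel_le {δ : ℝ} (hδ : 0 < δ) (u η : EuclideanSpace ℝ (Fin 2)) :
    (1 + ‖u + η‖) * (‖u‖ ^ (-1 : ℝ) * (1 + ‖η‖) ^ (-2 - δ)) ≤
      truncKernel 1 u + 3 * (1 + ‖η‖) ^ (-2 - δ) + 2 * (1 + ‖u‖) ^ (-2 - δ) := by
  have hA : 1 ≤ 1 + ‖η‖ := by linarith [norm_nonneg η]
  have hB : 1 ≤ 1 + ‖u‖ := by linarith [norm_nonneg u]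
  set A := 1 + ‖η‖ with hAdef
  set B := 1 + ‖u‖ with hBdef
  have hA0 : 0 < A := by linarith
  have hB0 : 0 < B := by linarith
  set a := A ^ (-2 - δ) with ha
  set b := B ^ (-2 - δ) with hb
  have ha0 : 0 ≤ a := by positivity
  have hb0 : 0 ≤ b := by positivity
  rw [Real.rpow_neg_one]
  have htri : 1 + ‖u + η‖ ≤ A + ‖u‖ := by linarith [norm_add_le u η]
  have hAa : A * a = A ^ (-1 - δ) := by
    rw [ha, ← Real.rpow_one_add' hA0.le (by linarith)]; congr 1; ring
  have hBb : B * b = B ^ (-1 - δ) := by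
    rw [hb, ← Real.rpow_one_add' hB0.le (by linarith)]; congr 1; ring
  have hone : ‖u‖ * ‖u‖⁻¹ ≤ 1 := mul_inv_le_one
  have key : ‖u‖⁻¹ * (A * a) ≤ truncKernel 1 u + 2 * (a + b) := by
    by_cases h : u ∈ Metric.ball (0 : EuclideanSpace ℝ (Fin 2)) 1
    · have h1 : truncKernel 1 u = ‖u‖⁻¹ := by
        rw [truncKernel, Set.indicator_of_mem h, Real.rpow_neg_one]
      have h2 : A * a ≤ 1 := by
        rw [hAa]; exact Real.rpow_le_one_of_one_le_of_nonpos hA (by linarith)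
      rw [h1]
      have := mul_le_mul_of_nonneg_left h2 (inv_nonneg.2 (norm_nonneg u))
      linarith
    · have h1 : 1 ≤ ‖u‖ := by simpa using h
      have h2 : ‖u‖⁻¹ ≤ 2 * B⁻¹ := by
        rw [← div_eq_mul_inv, inv_le_comm₀ (by linarith) (by positivity), inv_div]
        linarith
      have h3 : B⁻¹ * (A * a) ≤ a + b := by
        rw [inv_mul_le_iff₀ hB0]
        rcases le_total A B with hAB | hAB
        · nlinarith [mul_nonneg hB0.le hb0]
        · have : A ^ (-1 - δ) ≤ B ^ (-1 - δ) :=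
            Real.rpow_le_rpow_of_nonpos hB0 hAB (by linarith)
          rw [← hAa, ← hBb] at this
          nlinarith [mul_nonneg hB0.le ha0]
      have h4 := mul_le_mul_of_nonneg_right h2 (mul_nonneg hA0.le ha0)
      have := truncKernel_nonneg 1 u
      nlinarith
  have h5 : (1 + ‖u + η‖) * (‖u‖⁻¹ * a) ≤ (A + ‖u‖) * (‖u‖⁻¹ * a) := by gcongr
  have h6 := mul_le_mul_of_nonneg_right hone ha0
  nlinarith

section Potential
variable {C δ : ℝ} {f : EuclideanSpace ℝ (Fin 2) → ℝ}

/-- The Riesz potential of `|f|` with kernel `‖u‖ ^ (-s)`, `s < 2`, is finite and bounded by a constant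
that does not depend on `y`. -/
lemma kernel_integral_le (hC : 0 < C) (hδ : 0 < δ) (hfm : Measurable f)
    (hf : ∀ η, |f η| ≤ C * (1 + ‖η‖) ^ (-2 - δ)) {s : ℝ} (hs0 : 0 ≤ s) (hs : s < 2)
    (y : EuclideanSpace ℝ (Fin 2)) :
    Integrable (fun η => ‖y - η‖ ^ (-s) * |f η|) ∧
      ∫ η, ‖y - η‖ ^ (-s) * |f η| ≤ C * ((∫ u, truncKernel s u) +
        ∫ η : EuclideanSpace ℝ (Fin 2), (1 + ‖η‖) ^ (-2 - δ)) := by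
  have hi1 : Integrable (fun η => truncKernel s (y - η)) :=
    (integrable_truncKernel hs).comp_sub_left y
  have hi2 := integrable_weight hδ
  have hb : ∀ η, ‖y - η‖ ^ (-s) * |f η| ≤
      C * (truncKernel s (y - η) + (1 + ‖η‖) ^ (-2 - δ)) := by
    intro η
    have h1 := rpow_neg_le_truncKernel_add_one hs0 (y - η)
    have h2 : (1 + ‖η‖) ^ (-2 - δ) ≤ 1 :=
      Real.rpow_le_one_of_one_le_of_nonpos (by linarith [norm_nonneg η]) (by linarith)
    have h3 : (0 : ℝ) ≤ (1 + ‖η‖) ^ (-2 - δ) := by positivity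
    calc ‖y - η‖ ^ (-s) * |f η|
        ≤ (truncKernel s (y - η) + 1) * (C * (1 + ‖η‖) ^ (-2 - δ)) := by
          gcongr
          · linarith [truncKernel_nonneg s (y - η)]
          · exact hf η
      _ = C * (truncKernel s (y - η) * (1 + ‖η‖) ^ (-2 - δ) + (1 + ‖η‖) ^ (-2 - δ)) := by ring
      _ ≤ _ := by
          gcongr
          exact mul_le_of_le_one_right (truncKernel_nonneg _ _) h2
  have hi : Integrable (fun η => ‖y - η‖ ^ (-s) * |f η|) := by
    refine ((hi1.add hi2).const_mul C).mono'
      (Measurable.aestronglyMeasurable (by fun_prop)) (Filter.Eventually.of_forall fun η => ?_)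
    rw [Real.norm_of_nonneg (by positivity)]
    exact hb η
  refine ⟨hi, (integral_mono hi ((hi1.add hi2).const_mul C) hb).trans (le_of_eq ?_)⟩
  simp only [Pi.add_apply]
  rw [integral_const_mul, integral_add hi1 hi2,
    integral_sub_left_eq_self (fun u => truncKernel s u) volume y]

/-- The decay estimate `∫ ‖y - η‖⁻¹ |f η| dη = O((1 + ‖y‖)⁻¹)`, with a constant depending only on `C`
and `δ`. -/
lemma one_add_norm_mul_kernel_integral_le (hC : 0 < C) (hδ : 0 < δ) (hfm : Measurable f)
    (hf : ∀ η, |f η| ≤ C * (1 + ‖η‖) ^ (-2 - δ)) (y : EuclideanSpace ℝ (Fin 2)) :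
    (1 + ‖y‖) * ∫ η, ‖y - η‖ ^ (-1 : ℝ) * |f η| ≤ C * ((∫ u, truncKernel 1 u) +
        5 * ∫ η : EuclideanSpace ℝ (Fin 2), (1 + ‖η‖) ^ (-2 - δ)) := by
  have hi1 : Integrable (fun η => truncKernel 1 (y - η)) :=
    (integrable_truncKernel (by norm_num)).comp_sub_left y
  have hi2 := integrable_weight hδ
  have hi3 : Integrable (fun η => (1 + ‖y - η‖) ^ (-2 - δ)) := hi2.comp_sub_left y
  have hi := (kernel_integral_le hC hδ hfm hf zero_le_one one_lt_two y).1
  have hi4 := ((hi1.add (hi2.const_mul 3)).add (hi3.const_mul 2)).const_mul C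
  rw [← integral_const_mul]
  refine (integral_mono (hi.const_mul _) hi4 fun η => ?_).trans (le_of_eq ?_)
  · have h := one_add_norm_mul_kernel_le hδ (y - η) η
    rw [sub_add_cancel] at h
    calc (1 + ‖y‖) * (‖y - η‖ ^ (-1 : ℝ) * |f η|)
        ≤ (1 + ‖y‖) * (‖y - η‖ ^ (-1 : ℝ) * (C * (1 + ‖η‖) ^ (-2 - δ))) := by
          gcongr; exact hf η
      _ = C * ((1 + ‖y‖) * (‖y - η‖ ^ (-1 : ℝ) * (1 + ‖η‖) ^ (-2 - δ))) := by ring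
      _ ≤ _ := mul_le_mul_of_nonneg_left h hC.le
  · simp only [Pi.add_apply]
    have hi5 : Integrable fun η => truncKernel 1 (y - η) + 3 * (1 + ‖η‖) ^ (-2 - δ) :=
      hi1.add (hi2.const_mul 3)
    rw [integral_const_mul, integral_add hi5 (hi3.const_mul 2), integral_add hi1 (hi2.const_mul 3), integral_const_mul, integral_const_mul,
      integral_sub_left_eq_self (fun u => truncKernel 1 u) volume y,
      integral_sub_left_eq_self
        (fun u : EuclideanSpace ℝ (Fin 2) => (1 + ‖u‖) ^ (-2 - δ)) volume y]
    ring

/-- Near `y` the logarithm is dominated by `‖y - η‖⁻¹`; at infinity it grows more slowly than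
`(1 + ‖η‖) ^ (δ / 2)`, which costs half of the excess decay of `f`. -/
lemma integrable_log_kernel (hC : 0 < C) (hδ : 0 < δ) (hfm : Measurable f)
    (hf : ∀ η, |f η| ≤ C * (1 + ‖η‖) ^ (-2 - δ)) (y : EuclideanSpace ℝ (Fin 2)) :
    Integrable fun η => Real.log ‖y - η‖ * f η := by
  have hi := (kernel_integral_le hC hδ hfm hf zero_le_one one_lt_two y).1
  have hi2 := (integrable_weight (half_pos hδ)).const_mul ((1 + ‖y‖) ^ (δ / 2) / (δ / 2) * C)
  refine (hi.add hi2).mono' (Measurable.aestronglyMeasurable (by fun_prop))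
    (Filter.Eventually.of_forall fun η => ?_)
  have hlog : |Real.log ‖y - η‖| ≤ ‖y - η‖ ^ (-1 : ℝ) +
      (1 + ‖y‖) ^ (δ / 2) / (δ / 2) * (1 + ‖η‖) ^ (δ / 2) := by
    rcases le_total ‖y - η‖ 1 with h | h
    · have h1 : |Real.log ‖y - η‖| ≤ ‖y - η‖ ^ (-1 : ℝ) := by
        rw [abs_of_nonpos (Real.log_nonpos (norm_nonneg _) h), ← Real.log_inv, Real.rpow_neg_one]
        exact Real.log_le_self (inv_nonneg.2 (norm_nonneg _))
      have : 0 ≤ (1 + ‖y‖) ^ (δ / 2) / (δ / 2) * (1 + ‖η‖) ^ (δ / 2) := by positivity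
      linarith
    · rw [abs_of_nonneg (Real.log_nonneg h)]
      have h1 : ‖y - η‖ ≤ (1 + ‖y‖) * (1 + ‖η‖) := by
        nlinarith [norm_sub_le y η, mul_nonneg (norm_nonneg y) (norm_nonneg η)]
      have h2 := Real.log_le_rpow_div (norm_nonneg (y - η)) (half_pos hδ)
      have h3 : ‖y - η‖ ^ (δ / 2) ≤ ((1 + ‖y‖) * (1 + ‖η‖)) ^ (δ / 2) := by gcongr
      rw [Real.mul_rpow (by positivity) (by positivity)] at h3
      have h4 : ‖y - η‖ ^ (δ / 2) / (δ / 2) ≤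
          (1 + ‖y‖) ^ (δ / 2) * (1 + ‖η‖) ^ (δ / 2) / (δ / 2) := by gcongr
      have h5 : 0 ≤ ‖y - η‖ ^ (-1 : ℝ) := by positivity
      rw [div_mul_eq_mul_div]
      linarith
  have hw : (1 + ‖η‖) ^ (δ / 2) * (1 + ‖η‖) ^ (-2 - δ) = (1 + ‖η‖) ^ (-2 - δ / 2) := by
    rw [← Real.rpow_add (by positivity)]; congr 1; ring
  rw [norm_mul, Real.norm_eq_abs, Real.norm_eq_abs, Pi.add_apply]
  calc |Real.log ‖y - η‖| * |f η|
      ≤ (‖y - η‖ ^ (-1 : ℝ) + (1 + ‖y‖) ^ (δ / 2) / (δ / 2) * (1 + ‖η‖) ^ (δ / 2)) * |f η| := by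
        gcongr
    _ = ‖y - η‖ ^ (-1 : ℝ) * |f η| +
        (1 + ‖y‖) ^ (δ / 2) / (δ / 2) * (1 + ‖η‖) ^ (δ / 2) * |f η| := by ring
    _ ≤ ‖y - η‖ ^ (-1 : ℝ) * |f η| + (1 + ‖y‖) ^ (δ / 2) / (δ / 2) * (1 + ‖η‖) ^ (δ / 2) *
        (C * (1 + ‖η‖) ^ (-2 - δ)) := by gcongr; exact hf η
    _ = _ := by rw [← hw]; ring

lemma norm_kernel_smul (y η : EuclideanSpace ℝ (Fin 2)) :
    ‖(f η / ‖y - η‖ ^ 2) • (y - η)‖ = ‖y - η‖ ^ (-1 : ℝ) * |f η| := by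
  rw [norm_smul, norm_div, norm_pow, norm_norm, Real.norm_eq_abs, Real.rpow_neg_one]
  rcases eq_or_ne ‖y - η‖ 0 with h | h
  · simp [h]
  · field_simp

lemma integrable_kernel_smul (hC : 0 < C) (hδ : 0 < δ) (hfm : Measurable f)
    (hf : ∀ η, |f η| ≤ C * (1 + ‖η‖) ^ (-2 - δ)) (y : EuclideanSpace ℝ (Fin 2)) :
    Integrable fun η => (f η / ‖y - η‖ ^ 2) • (y - η) :=
  (kernel_integral_le hC hδ hfm hf zero_le_one one_lt_two y).1.mono'
    (Measurable.aestronglyMeasurable (by fun_prop))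
    (Filter.Eventually.of_forall fun η => (norm_kernel_smul y η).le)

/-- Differentiation of the logarithmic potential under the integral sign; the remainder is
`O(‖h‖ ^ (3 / 2))`. -/
lemma hasFDerivAt_log_potential (hC : 0 < C) (hδ : 0 < δ) (hfm : Measurable f)
    (hf : ∀ η, |f η| ≤ C * (1 + ‖η‖) ^ (-2 - δ)) (y : EuclideanSpace ℝ (Fin 2)) :
    HasFDerivAt (fun y => ∫ η, Real.log ‖y - η‖ * f η)
      (innerSL ℝ (∫ η, (f η / ‖y - η‖ ^ 2) • (y - η))) y := by
  set M := C * ((∫ u, truncKernel (3 / 2) u) +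
        ∫ η : EuclideanSpace ℝ (Fin 2), (1 + ‖η‖) ^ (-2 - δ)) with hM
  have hbound : ∀ h : EuclideanSpace ℝ (Fin 2),
      ‖(∫ η, Real.log ‖y + h - η‖ * f η) - (∫ η, Real.log ‖y - η‖ * f η) -
        innerSL ℝ (∫ η, (f η / ‖y - η‖ ^ 2) • (y - η)) h‖ ≤
      8 * M * ‖h‖ ^ (3 / 2 : ℝ) := by
    intro h
    have hG := integrable_kernel_smul hC hδ hfm hf y
    have hGh : Integrable fun η => inner ℝ h ((f η / ‖y - η‖ ^ 2) • (y - η)) :=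
      hG.const_inner h
    have hL1 := integrable_log_kernel hC hδ hfm hf (y + h)
    have hL2 := integrable_log_kernel hC hδ hfm hf y
    obtain ⟨hK1, hK1'⟩ := kernel_integral_le hC hδ hfm hf (s := 3 / 2)
      (by norm_num) (by norm_num) y
    obtain ⟨hK2, hK2'⟩ := kernel_integral_le hC hδ hfm hf (s := 3 / 2)
      (by norm_num) (by norm_num) (y + h)
    have hL : Integrable fun η => Real.log ‖y + h - η‖ * f η - Real.log ‖y - η‖ * f η :=
      hL1.sub hL2
    rw [innerSL_apply_apply, real_inner_comm, ← integral_inner hG h, ← integral_sub hL1 hL2,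
      ← integral_sub hL hGh]
    refine (norm_integral_le_of_norm_le
      ((hK1.add hK2).const_mul (4 * ‖h‖ ^ (3 / 2 : ℝ))) ?_).trans ?_
    · -- The two exceptional points, at which the logarithms take junk values, form a null set.
      filter_upwards [Measure.ae_ne volume y, Measure.ae_ne volume (y + h)] with η h1 h2
      have e : y + h - η = (y - η) + h := by abel
      have hr := log_norm_remainder_le (u := y - η) (h := h) (sub_ne_zero.2 h1.symm)
        (by rw [← e]; exact sub_ne_zero.2 h2.symm)
      rw [← e] at hr
      have e2 : Real.log ‖y + h - η‖ * f η - Real.log ‖y - η‖ * f η -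
          inner ℝ h ((f η / ‖y - η‖ ^ 2) • (y - η)) =
          (Real.log ‖y + h - η‖ - Real.log ‖y - η‖ - inner ℝ (y - η) h / ‖y - η‖ ^ 2) * f η := by
        rw [inner_smul_right, real_inner_comm]; ring
      rw [e2, norm_mul, Real.norm_eq_abs, Real.norm_eq_abs, Pi.add_apply]
      refine (mul_le_mul_of_nonneg_right hr (abs_nonneg _)).trans (le_of_eq ?_)
      ring
    · simp only [Pi.add_apply]
      rw [integral_const_mul, integral_add hK1 hK2]
      have : 0 ≤ ‖h‖ ^ (3 / 2 : ℝ) := by positivity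
      nlinarith
  rw [hasFDerivAt_iff_isLittleO_nhds_zero]
  refine (Asymptotics.IsBigO.of_bound (g := fun h => ‖h‖ ^ (3 / 2 : ℝ)) (8 * M)
    (Filter.Eventually.of_forall fun h => ?_)).trans_isLittleO ?_
  · rw [Real.norm_of_nonneg (by positivity : (0 : ℝ) ≤ ‖h‖ ^ (3 / 2 : ℝ))]
    exact hbound h
  · rw [← Asymptotics.isLittleO_norm_right]
    have h1 : Filter.Tendsto (fun h : EuclideanSpace ℝ (Fin 2) => ‖h‖ ^ (1 / 2 : ℝ))
        (nhds 0) (nhds 0) := by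
      have : Continuous (fun h : EuclideanSpace ℝ (Fin 2) => ‖h‖ ^ (1 / 2 : ℝ)) :=
        continuous_norm.rpow_const fun _ => Or.inr (by norm_num)
      simpa using this.tendsto 0
    have h2 := (Asymptotics.isLittleO_one_iff ℝ).2 h1 |>.mul_isBigO
      (Asymptotics.isBigO_refl (fun h : EuclideanSpace ℝ (Fin 2) => ‖h‖) (nhds 0))
    refine h2.congr (fun h => ?_) fun h => one_mul _
    rw [← Real.rpow_add_one' (norm_nonneg h) (by norm_num)]
    norm_num

end Potential

/-- **Gradient decay of the logarithmic potential from Lemma 2.1.** If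
`|f(η)| ≤ C (1+|η|)^{-2-δ}` on `ℝ²`, then the logarithmic potential
`w(y) = -(1/2π) ∫ log |y - η| f(η) dη` is differentiable on `ℝ²` and its gradient
satisfies `|∇w(y)| ≤ C' (1 + |y|)^{-1}`, where `C'` depends only on `C` and `δ`. -/
theorem stmt11 (C δ : ℝ) (hC : 0 < C) (hδ : 0 < δ) :
    ∃ C' > (0 : ℝ), ∀ f : EuclideanSpace ℝ (Fin 2) → ℝ, Measurable f →
      (∀ η, |f η| ≤ C * (1 + ‖η‖) ^ (-2 - δ)) →
      Differentiable ℝ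
        (fun y : EuclideanSpace ℝ (Fin 2) =>
          -(1 / (2 * Real.pi)) * ∫ η, Real.log ‖y - η‖ * f η) ∧
      ∀ y : EuclideanSpace ℝ (Fin 2),
        ‖gradient (fun y : EuclideanSpace ℝ (Fin 2) =>
            -(1 / (2 * Real.pi)) * ∫ η, Real.log ‖y - η‖ * f η) y‖
          ≤ C' * (1 + ‖y‖)⁻¹ := by
  set B := C * ((∫ u, truncKernel 1 u) +
        5 * ∫ η : EuclideanSpace ℝ (Fin 2), (1 + ‖η‖) ^ (-2 - δ)) with hB
  have hB0 : 0 ≤ B := by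
    have h1 : 0 ≤ ∫ u, truncKernel 1 u := integral_nonneg (truncKernel_nonneg 1)
    have h2 : 0 ≤ ∫ η : EuclideanSpace ℝ (Fin 2), (1 + ‖η‖) ^ (-2 - δ) :=
      integral_nonneg fun η => by positivity
    positivity
  -- The summand `1` makes the constant strictly positive.
  refine ⟨1 / (2 * Real.pi) * B + 1, by positivity, fun f hfm hf => ?_⟩
  have hd : ∀ y, HasFDerivAt (fun y : EuclideanSpace ℝ (Fin 2) =>
      -(1 / (2 * Real.pi)) * ∫ η, Real.log ‖y - η‖ * f η) _ y := fun y =>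
    (hasFDerivAt_log_potential hC hδ hfm hf y).const_mul (-(1 / (2 * Real.pi)))
  refine ⟨fun y => (hd y).differentiableAt, fun y => ?_⟩
  have hy : 0 < 1 + ‖y‖ := by positivity
  rw [gradient, LinearIsometryEquiv.norm_map, (hd y).fderiv, norm_smul, innerSL_apply_norm,
    norm_neg, Real.norm_of_nonneg (by positivity), ← div_eq_mul_inv, le_div_iff₀ hy]
  have h1 : ‖∫ η, (f η / ‖y - η‖ ^ 2) • (y - η)‖ ≤ ∫ η, ‖y - η‖ ^ (-1 : ℝ) * |f η| :=
    (norm_integral_le_integral_norm _).trans_eq (by simp only [norm_kernel_smul])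
  have h2 := one_add_norm_mul_kernel_integral_le hC hδ hfm hf y
  have h3 : ‖∫ η, (f η / ‖y - η‖ ^ 2) • (y - η)‖ * (1 + ‖y‖) ≤ B := by
    rw [mul_comm]
    exact (mul_le_mul_of_nonneg_left h1 hy.le).trans h2
  rw [mul_assoc]
  have := mul_le_mul_of_nonneg_left h3 (by positivity : 0 ≤ 1 / (2 * Real.pi))
  linarith
end
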